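/- Matrix element representation of the q-deformed Whittaker function over a quantum torus: let A be an associative unital K-algebra containing elements X_{k,i}, T_{k,i} (1 ≤ k ≤ ℓ, 1 ≤ i ≤ k) such that T_{k,i} X_{m,j} = q^{δ_{km}δ_{ij}} X_{m,j} T_{k,i} for all indices, the X's commute pairwise, and the T's commute pairwise. Define f_{n,i} ∈ A for 0 ≤ i ≤ n ≤ ℓ+1 by f_{n,0} := 1, f_{n,n} := z_1 z_2 ⋯ z_n · 1, and f_{n,i} := f_{n−1,i} X_{n−1,i} + z_n f_{n−1,i−1} T_{n−1,i} for 1 ≤ i ≤ n−1. Let V be a left A-module, v_+ ∈ V with T_{k,i} v_+ = v_+ for all k, i, and let φ : V → K be a K-linear functional with φ(X_{k,i} w) = φ(w) for all w ∈ V and all k, i, and φ(v_+) = 1. Then for every dominant p = (p_1 ≥ p_2 ≥ … ≥ p_{ℓ+1}) ∈ ℤ^{ℓ+1} with p_{ℓ+1} ≥ 0 one has φ( f_{ℓ+1,1}^{p_1−p_2} · f_{ℓ+1,2}^{p_2−p_3} · ⋯ · f_{ℓ+1,ℓ}^{p_ℓ−p_{ℓ+1}} · f_{ℓ+1,ℓ+1}^{p_{ℓ+1}}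 · v_+ ) = Ψ̃_z(p), where Ψ̃_z(p) := (∏_{i=1}^{ℓ}(p_i − p_{i+1})_q!) · Ψ_z(p) is the normalized q-deformed gl_{ℓ+1}-Whittaker function. -/

import Mathlib

open Finset

/-- The `q`-factorial `(n)_q! = ∏_{m=1}^{n} (1 - q^m)` (equal to `1` for `n ≤ 0`). -/
noncomputable def qfac {K : Type*} [Field K] (q : K) (n : ℤ) : K :=
  ∏ m ∈ Finset.range n.toNat, (1 - q ^ (m + 1))

/-- A Gelfand–Zetlin pattern: a triangular array `g k i = p_{k+1,i+1}` (0-indexed),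
satisfying the interlacing conditions `p_{k+1,i} ≥ p_{k,i} ≥ p_{k+1,i+1}`. -/
def IsGZ {n : ℕ} (g : ∀ k : Fin (n + 1), Fin ((k : ℕ) + 1) → ℤ) : Prop :=
  ∀ (k : Fin n) (i : Fin ((k : ℕ) + 1)),
    g k.castSucc i ≤ g k.succ i.castSucc ∧ g k.succ i.succ ≤ g k.castSucc i

/-- The weight of a Gelfand–Zetlin pattern in the explicit formula for the
`q`-deformed `gl_{n+1}`-Whittaker function. -/
noncomputable def gzWeight {K : Type*} [Field K] (q : K) {n : ℕ} (z : Fin (n + 1) → K)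
    (g : ∀ k : Fin (n + 1), Fin ((k : ℕ) + 1) → ℤ) : K :=
  z ⟨0, n.succ_pos⟩ ^ g ⟨0, n.succ_pos⟩ ⟨0, Nat.one_pos⟩ *
  (∏ k : Fin n, z k.succ ^ ((∑ i, g k.succ i) - ∑ i, g k.castSucc i)) *
  (∏ k : Fin n, ∏ i : Fin (k : ℕ), qfac q (g k.castSucc i.castSucc - g k.castSucc i.succ)) *
  (∏ k : Fin n, ∏ i : Fin ((k : ℕ) + 1),
      (qfac q (g k.succ i.castSucc - g k.castSucc i) *
       qfac q (g k.castSucc i - g k.succ i.succ)))⁻¹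

/-- The `q`-deformed `gl_{n+1}`-Whittaker function `Ψ_z(p)`: the sum over all
Gelfand–Zetlin patterns with top row `p` of their weights, if `p` is dominant,
and `0` otherwise. -/
noncomputable def whit {K : Type*} [Field K] (q : K) (n : ℕ) (z : Fin (n + 1) → K)
    (p : Fin (n + 1) → ℤ) : K := by
  classical
  exact if (∀ k : Fin n, p k.succ ≤ p k.castSucc) then
    ∑ g ∈ (Finset.Icc (fun (k : Fin (n + 1)) (_ : Fin ((k : ℕ) + 1)) => p (Fin.last n))
        (fun (k : Fin (n + 1)) (_ : Fin ((k : ℕ) + 1)) => p ⟨0, n.succ_pos⟩)).filter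
        (fun g => IsGZ g ∧ g (Fin.last n) = p),
      gzWeight q z g
  else 0

/-- The normalized `q`-deformed Whittaker function
`Ψ̃_z(p) = (∏_{i=1}^{n} (p_i - p_{i+1})_q!) ⬝ Ψ_z(p)`. -/
noncomputable def nwhit {K : Type*} [Field K] (q : K) (n : ℕ) (z : Fin (n + 1) → K)
    (p : Fin (n + 1) → ℤ) : K :=
  (∏ i : Fin n, qfac q (p i.castSucc - p i.succ)) * whit q n z p

/-- The elements `f_{n,i}` of the quantum torus algebra:
`f_{n,0} = 1`, `f_{n,n} = z_1 ⋯ z_n`, and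
`f_{n,i} = f_{n-1,i} X_{n-1,i} + z_n f_{n-1,i-1} T_{n-1,i}` for `1 ≤ i ≤ n-1`. -/
noncomputable def qtorF {K : Type*} [Field K] {A : Type*} [Ring A] [Algebra K A]
    (z : ℕ → K) (X T : ℕ → ℕ → A) : ℕ → ℕ → A
  | _, 0 => 1
  | 0, _ + 1 => 0
  | n + 1, i + 1 =>
      if i + 1 = n + 1 then z (n + 1) • qtorF z X T n i
      else qtorF z X T n (i + 1) * X n (i + 1) + z (n + 1) • (qtorF z X T n i * T n (i + 1))

/-! ### Gaussian binomials -/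

/-- Gaussian binomial coefficients defined by the Pascal recursion. -/
def gaussB {K : Type*} [Field K] (q : K) : ℕ → ℕ → K
  | _, 0 => 1
  | 0, _ + 1 => 0
  | n + 1, k + 1 => gaussB q n k + q ^ (k + 1) * gaussB q n (k + 1)

theorem gaussB_zero {K : Type*} [Field K] (q : K) (n : ℕ) : gaussB q n 0 = 1 := by
  cases n <;> rfl

theorem gaussB_lt {K : Type*} [Field K] (q : K) (n : ℕ) : ∀ k, n < k → gaussB q n k = 0 := by
  induction n with
  | zero => intro k hk; cases k with
    | zero => omega
    | succ k => rfl
  | succ n ih => intro k hk; cases k with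
    | zero => omega
    | succ k => simp [gaussB, ih k (by omega), ih (k+1) (by omega)]

theorem qfac_nat_succ {K : Type*} [Field K] (q : K) (n : ℕ) :
    qfac q ((n + 1 : ℕ) : ℤ) = qfac q (n : ℤ) * (1 - q ^ (n + 1)) := by
  simp only [qfac, Int.toNat_natCast, Finset.prod_range_succ]

theorem gaussB_mul {K : Type*} [Field K] (q : K) (n : ℕ) : ∀ k d : ℕ, k + d = n →
    gaussB q n k * (qfac q (k : ℤ) * qfac q (d : ℤ)) = qfac q (n : ℤ) := by
  induction n with
  | zero =>
    intro k d h
    obtain ⟨rfl, rfl⟩ : k = 0 ∧ d = 0 := by omega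
    simp [gaussB, qfac]
  | succ n ih =>
    intro k d h
    cases k with
    | zero =>
      obtain rfl : d = n + 1 := by omega
      simp [gaussB, qfac]
    | succ k =>
      cases d with
      | zero =>
        obtain rfl : k = n := by omega
        have := ih k 0 (by omega)
        rw [gaussB, gaussB_lt q k (k+1) (by omega), qfac_nat_succ]
        linear_combination (1 - q^(k+1)) * this
      | succ d =>
        have h1 := ih k (d+1) (by omega)
        have h2 := ih (k+1) d (by omega)
        rw [qfac_nat_succ] at h1 h2
        rw [gaussB, qfac_nat_succ, qfac_nat_succ, qfac_nat_succ]
        have : n + 1 = (k + 1) + (d + 1) := by omega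
        rw [this, pow_add]
        linear_combination (1 - q^(k+1)) * h1 + q^(k+1) * (1 - q^(d+1)) * h2

theorem qfac_ne {K : Type*} [Field K] (q : K) (hq : ∀ n : ℕ, 1 ≤ n → q ^ n ≠ 1) (n : ℤ) :
    qfac q n ≠ 0 := by
  rw [qfac, Finset.prod_ne_zero_iff]
  intro m _
  rw [sub_ne_zero]
  exact (hq (m+1) (by omega)).symm

theorem q_binomial {K : Type*} [Field K] {A : Type*} [Ring A] [Algebra K A] (q : K) (x y : A)
    (h : y * x = q • (x * y)) (n : ℕ) :
    (x + y) ^ n = ∑ c ∈ Finset.range (n + 1), gaussB q n c • (x ^ c * y ^ (n - c)) := by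
  have hyx : ∀ c : ℕ, y * x ^ c = q ^ c • (x ^ c * y) := by
    intro c
    induction c with
    | zero => simp
    | succ c ih =>
      rw [pow_succ, ← mul_assoc, ih, smul_mul_assoc, mul_assoc, h, mul_smul_comm, smul_smul,
        ← pow_succ, mul_assoc]
  induction n with
  | zero => simp [gaussB]
  | succ n ih =>
    have e1 : x * (x + y)^n = ∑ c ∈ Finset.range (n + 1),
        gaussB q n c • (x ^ (c+1) * y ^ (n - c)) := by
      rw [ih, Finset.mul_sum]
      refine Finset.sum_congr rfl fun c _ => ?_
      rw [mul_smul_comm, ← mul_assoc, ← pow_succ']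
    have e2 : y * (x + y)^n = ∑ c ∈ Finset.range (n + 1),
        (q ^ c * gaussB q n c) • (x ^ c * y ^ (n + 1 - c)) := by
      rw [ih, Finset.mul_sum]
      refine Finset.sum_congr rfl fun c hc => ?_
      have : n + 1 - c = (n - c) + 1 := by
        have := Finset.mem_range.1 hc; omega
      rw [mul_smul_comm, ← mul_assoc, hyx, smul_mul_assoc, smul_smul, mul_assoc, this,
        pow_succ' y, mul_comm]
    have e3 : y * (x + y)^n = ∑ c ∈ Finset.range (n + 1),
        (q ^ (c+1) * gaussB q n (c+1)) • (x ^ (c+1) * y ^ (n - c)) + y ^ (n+1) := by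
      rw [e2, Finset.sum_range_succ', Finset.sum_range_succ _ n]
      simp [gaussB_lt q n (n+1) (by omega), gaussB_zero]
    rw [pow_succ', add_mul, e1, e3, Finset.sum_range_succ' _ (n+1), ← add_assoc,
      ← Finset.sum_add_distrib]
    congr 1
    · refine Finset.sum_congr rfl fun c _ => ?_
      rw [gaussB, add_smul]
      simp
    · simp [gaussB]

/-! ### Recursion for the Whittaker function -/

theorem IsGZ.lower {n : ℕ} {g : ∀ k : Fin (n + 2), Fin ((k : ℕ) + 1) → ℤ} (h : IsGZ g) :
    IsGZ (n := n) (fun k => g k.castSucc) := fun k i => h k.castSucc i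

theorem IsGZ.row_anti {n : ℕ} {g : ∀ k : Fin (n + 1), Fin ((k : ℕ) + 1) → ℤ} (h : IsGZ g) :
    Antitone (g (Fin.last n)) := by
  cases n with
  | zero =>
    intro a b _
    have : a = b := Fin.ext (by have := a.2; have := b.2; simp at *)
    rw [this]
  | succ n =>
    have : Antitone (fun i : Fin (n + 2) => g (Fin.last (n+1)) i) := by
      rw [Fin.antitone_iff_succ_le]
      intro i
      have := h (Fin.last n) i
      exact this.2.trans this.1
    exact this

theorem IsGZ.bound {n : ℕ} : ∀ {g : ∀ k : Fin (n + 1), Fin ((k : ℕ) + 1) → ℤ} (_ : IsGZ g)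
    (k : Fin (n+1)) (i : Fin ((k : ℕ) + 1)),
    g (Fin.last n) (Fin.last n) ≤ g k i ∧ g k i ≤ g (Fin.last n) ⟨0, n.succ_pos⟩ := by
  induction n with
  | zero =>
    intro g h k i
    have hk : k = Fin.last 0 := Fin.ext (by have := k.2; simp at *)
    subst hk
    exact ⟨h.row_anti (Fin.le_last i), h.row_anti (Fin.zero_le i)⟩
  | succ n ih =>
    intro g h k
    refine Fin.lastCases ?_ ?_ k
    · intro i
      exact ⟨h.row_anti (Fin.le_last i), h.row_anti (Fin.zero_le i)⟩
    · intro k i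
      have h1 := ih h.lower k i
      exact ⟨(h (Fin.last n) (Fin.last n)).2.trans h1.1,
        h1.2.trans (h (Fin.last n) ⟨0, n.succ_pos⟩).1⟩

open Classical in
theorem whit_eq {K : Type*} [Field K] (q : K) (n : ℕ) (z : Fin (n + 1) → K)
    (p : Fin (n + 1) → ℤ) (hp : ∀ k : Fin n, p k.succ ≤ p k.castSucc) :
    ∃ S : Finset (∀ k : Fin (n + 1), Fin ((k : ℕ) + 1) → ℤ),
      (∀ g, g ∈ S ↔ IsGZ g ∧ g (Fin.last n) = p) ∧ whit q n z p = ∑ g ∈ S, gzWeight q z g := by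
  refine ⟨_, ?_, by rw [whit]; exact if_pos hp⟩
  intro g
  rw [Finset.mem_filter, Finset.mem_Icc]
  constructor
  · exact fun h => h.2
  · rintro ⟨h, rfl⟩
    exact ⟨⟨fun k i => (h.bound k i).1, fun k i => (h.bound k i).2⟩, h, rfl⟩

theorem gzWeight_succ {K : Type*} [Field K] (q : K) {n : ℕ} (z : Fin (n + 2) → K)
    (g : ∀ k : Fin (n + 2), Fin ((k : ℕ) + 1) → ℤ) (p : Fin (n+2) → ℤ) (r : Fin (n+1) → ℤ)
    (hgp : g (Fin.last (n+1)) = p) (hgr : g (Fin.last n).castSucc = r) :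
    gzWeight q z g = z (Fin.last (n+1)) ^ ((∑ i, p i) - ∑ i, r i) *
      (∏ i : Fin n, qfac q (r i.castSucc - r i.succ)) *
      (∏ i : Fin (n+1), (qfac q (p i.castSucc - r i) * qfac q (r i - p i.succ)))⁻¹ *
      gzWeight q (n := n) (fun k => z k.castSucc) (fun k => g k.castSucc) := by
  subst hgp hgr
  unfold gzWeight
  rw [Fin.prod_univ_castSucc, Fin.prod_univ_castSucc
    (f := fun k : Fin (n+1) => ∏ i : Fin (k : ℕ), qfac q (g k.castSucc i.castSucc - g k.castSucc i.succ)),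
    Fin.prod_univ_castSucc
    (f := fun k : Fin (n+1) => ∏ i : Fin ((k : ℕ) + 1),
      (qfac q (g k.succ i.castSucc - g k.castSucc i) *
       qfac q (g k.castSucc i - g k.succ i.succ))), mul_inv]
  simp only [Fin.val_castSucc, Fin.val_last, Fin.succ_last, Fin.succ_castSucc]
  have : ∀ a b1 b2 c1 c2 d1 d2 : K, a * (b1 * b2) * (c1 * c2) * (d1 * d2) =
    b2 * c2 * d2 * (a * b1 * c1 * d1) := by intros; ring
  exact this _ _ _ _ _ _ _

theorem whit_succ {K : Type*} [Field K] (q : K) (n : ℕ) (z : Fin (n + 2) → K)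
    (p : Fin (n + 2) → ℤ) (hp : ∀ k : Fin (n+1), p k.succ ≤ p k.castSucc) :
    whit q (n+1) z p = ∑ r ∈ Finset.Icc (fun i : Fin (n+1) => p i.succ) (fun i => p i.castSucc),
      z (Fin.last (n+1)) ^ ((∑ i, p i) - ∑ i, r i) *
      (∏ i : Fin n, qfac q (r i.castSucc - r i.succ)) *
      (∏ i : Fin (n+1), (qfac q (p i.castSucc - r i) * qfac q (r i - p i.succ)))⁻¹ *
      whit q n (fun k => z k.castSucc) r := by
  classical
  obtain ⟨S, hS, hw⟩ := whit_eq q (n+1) z p hp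
  rw [hw, ← Finset.sum_fiberwise_of_maps_to (s := S)
    (t := Finset.Icc (fun i : Fin (n+1) => p i.succ) (fun i => p i.castSucc))
    (g := fun g => g (Fin.last n).castSucc)]
  · refine Finset.sum_congr rfl fun r hr => ?_
    rw [Finset.mem_Icc] at hr
    obtain ⟨S', hS', hw'⟩ := whit_eq q n (fun k => z k.castSucc) r (fun k =>
      (hr.2 k.succ).trans (hr.1 k.castSucc))
    rw [hw', Finset.mul_sum]
    refine Finset.sum_bij' (i := fun g _ k => g k.castSucc)
      (j := fun g _ => Fin.snoc (α := fun k : Fin (n+2) => Fin ((k:ℕ)+1) → ℤ) g p) ?_ ?_ ?_ ?_ ?_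
    · intro g hg
      rw [Finset.mem_filter, hS] at hg
      rw [hS']
      exact ⟨hg.1.1.lower, hg.2⟩
    · intro g hg
      rw [hS'] at hg
      rw [Finset.mem_filter, hS]
      refine ⟨⟨?_, by simp⟩, by simp only [Fin.snoc_castSucc]; exact hg.2⟩
      intro k
      refine Fin.lastCases ?_ ?_ k
      · intro i
        have e1 : Fin.snoc (α := fun k : Fin (n+2) => Fin ((k:ℕ)+1) → ℤ) g p
          (Fin.last n).castSucc = r := by simp only [Fin.snoc_castSucc]; exact hg.2
        have e2 : Fin.snoc (α := fun k : Fin (n+2) => Fin ((k:ℕ)+1) → ℤ) g p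
          (Fin.last n).succ = p := by
            exact Fin.snoc_last (α := fun k : Fin (n+2) => Fin ((k:ℕ)+1) → ℤ) p g
        rw [e1, e2]
        exact ⟨hr.2 i, hr.1 i⟩
      · intro k i
        have e1 : Fin.snoc (α := fun k : Fin (n+2) => Fin ((k:ℕ)+1) → ℤ) g p
          k.castSucc.castSucc = g k.castSucc := by simp only [Fin.snoc_castSucc]
        have e2 : Fin.snoc (α := fun k : Fin (n+2) => Fin ((k:ℕ)+1) → ℤ) g p
          k.castSucc.succ = g k.succ := by
            exact Fin.snoc_castSucc (α := fun k : Fin (n+2) => Fin ((k:ℕ)+1) → ℤ) p g k.succ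
        rw [e1, e2]
        exact hg.1 k i
    · intro g hg
      rw [Finset.mem_filter, hS] at hg
      rw [← hg.1.2]
      exact Fin.snoc_init_self (α := fun k : Fin (n+2) => Fin ((k:ℕ)+1) → ℤ) g
    · intro g hg
      funext k
      simp only [Fin.snoc_castSucc]
    · intro g hg
      rw [Finset.mem_filter, hS] at hg
      exact gzWeight_succ q z g p r hg.1.2 hg.2
  · intro g hg
    rw [hS] at hg
    obtain ⟨h, rfl⟩ := hg
    rw [Finset.mem_Icc]
    exact ⟨fun i => (h (Fin.last n) i).2, fun i => (h (Fin.last n) i).1⟩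

theorem nwhit_succ {K : Type*} [Field K] (q : K)
    (n : ℕ) (z : Fin (n + 2) → K)
    (p : Fin (n + 2) → ℤ) (hp : ∀ k : Fin (n+1), p k.succ ≤ p k.castSucc) :
    nwhit q (n+1) z p =
      ∑ r ∈ Finset.Icc (fun i : Fin (n+1) => p i.succ) (fun i => p i.castSucc),
      z (Fin.last (n+1)) ^ ((∑ i, p i) - ∑ i, r i) *
      (∏ i : Fin (n+1), (qfac q (p i.castSucc - p i.succ) /
        (qfac q (r i - p i.succ) * qfac q (p i.castSucc - r i)))) *
      nwhit q n (fun k => z k.castSucc) r := by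
  rw [nwhit, whit_succ q n z p hp, Finset.mul_sum]
  refine Finset.sum_congr rfl fun r _ => ?_
  rw [nwhit, Finset.prod_div_distrib]
  have : ∀ i : Fin (n+1), (qfac q (p i.castSucc - r i) * qfac q (r i - p i.succ)) =
    (qfac q (r i - p i.succ) * qfac q (p i.castSucc - r i)) := fun i => mul_comm _ _
  simp only [this]
  ring

/-! ### Iteration lemma -/

theorem iterate_sum {K : Type*} [Field K] (a : ℕ → ℕ) (w : ℕ → ℕ → K) (s : ℕ → ℕ → ℕ → ℕ)
    (N : ℕ → (ℕ → ℕ) → K) (n : ℕ)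
    (h : ∀ m < n, ∀ e, N (m+1) e = ∑ c ∈ Finset.range (a m + 1), w m c * N m (e + s m c)) :
    ∀ e, N n e = ∑ c ∈ Fintype.piFinset (fun k : Fin n => Finset.range (a k + 1)),
      (∏ k : Fin n, w k (c k)) * N 0 (e + ∑ k : Fin n, s k (c k)) := by
  induction n with
  | zero => intro e; simp
  | succ n ih =>
    intro e
    rw [h n (by omega)]
    have ih' := ih (fun m hm => h m (by omega))
    simp only [ih', Finset.mul_sum]
    rw [← Finset.sum_product']
    refine Finset.sum_bij' (i := fun x _ => Fin.snoc (α := fun _ => ℕ) x.2 x.1)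
      (j := fun c _ => (c (Fin.last n), fun k => c k.castSucc)) ?_ ?_ ?_ ?_ ?_
    · rintro ⟨c0, c⟩ hc
      simp only [Finset.mem_product, Fintype.mem_piFinset] at hc ⊢
      intro k
      refine Fin.lastCases ?_ ?_ k
      · simpa using hc.1
      · intro k; simpa using hc.2 k
    · intro c hc
      simp only [Finset.mem_product, Fintype.mem_piFinset] at hc ⊢
      exact ⟨hc _, fun k => hc k.castSucc⟩
    · rintro ⟨c0, c⟩ hc
      simp
    · intro c hc
      exact Fin.snoc_init_self (α := fun _ => ℕ) c
    · rintro ⟨c0, c⟩ hc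
      rw [Fin.prod_univ_castSucc, Fin.sum_univ_castSucc]
      simp only [Fin.snoc_castSucc, Fin.snoc_last, Fin.val_castSucc, Fin.val_last]
      rw [add_assoc, add_comm (s n c0)]
      ring

/-! ### Commuting families -/

/-- Ordered monomials in a family. -/
def lmon {A : Type*} [Ring A] (g : ℕ → A) (m : ℕ) (e : ℕ → ℕ) : A :=
  ((List.range m).map (fun k => g k ^ e k)).prod

theorem lmon_succ {A : Type*} [Ring A] (g : ℕ → A) (m : ℕ) (e : ℕ → ℕ) :
    lmon g (m+1) e = lmon g m e * g m ^ e m := by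
  simp [lmon, List.range_succ]

theorem lmon_congr {A : Type*} [Ring A] (g g' : ℕ → A) (m : ℕ) (e e' : ℕ → ℕ)
    (h : ∀ k < m, g k ^ e k = g' k ^ e' k) : lmon g m e = lmon g' m e' := by
  unfold lmon
  congr 1
  apply List.map_congr_left
  intro k hk
  exact h k (List.mem_range.1 hk)

theorem lmon_commute {A : Type*} [Ring A] (g : ℕ → A) (m : ℕ) (e : ℕ → ℕ) (y : A)
    (h : ∀ k < m, Commute y (g k)) : Commute y (lmon g m e) := by
  induction m with
  | zero => simp [lmon]
  | succ m ih =>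
    rw [lmon_succ]
    exact (ih fun k hk => h k (by omega)).mul_right ((h m (by omega)).pow_right _)

theorem lmon_pow_mul {A : Type*} [Ring A] (g : ℕ → A) (m : ℕ) (e : ℕ → ℕ) (i c : ℕ) (hi : i < m)
    (h : ∀ k < m, ∀ j < m, Commute (g k) (g j)) :
    g i ^ c * lmon g m e = lmon g m (e + Pi.single i c) := by
  induction m with
  | zero => omega
  | succ m ih =>
    rw [lmon_succ, lmon_succ]
    by_cases him : i = m
    · subst him
      have h1 : Commute (g i ^ c) (lmon g i e) :=
        lmon_commute _ _ _ _ fun k hk => (h i (by omega) k (by omega)).pow_left c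
      rw [← mul_assoc, h1.eq, mul_assoc, ← pow_add]
      congr 1
      · apply lmon_congr
        intro k hk
        simp [hk.ne]
      · simp [add_comm]
    · rw [← mul_assoc, ih (by omega) (fun k hk j hj => h k (by omega) j (by omega))]
      congr 2
      simp [Ne.symm him]

section torus

variable {K : Type*} [Field K] {A : Type*} [Ring A] [Algebra K A]

theorem qtorF_zero (z : ℕ → K) (X T : ℕ → ℕ → A) (n : ℕ) : qtorF z X T n 0 = 1 := by
  cases n <;> rw [qtorF]

theorem qtorF_top (z : ℕ → K) (X T : ℕ → ℕ → A) (n : ℕ) :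
    qtorF z X T (n+1) (n+1) = z (n+1) • qtorF z X T n n := by
  rw [qtorF, if_pos rfl]

theorem qtorF_mid (z : ℕ → K) (X T : ℕ → ℕ → A) (n i : ℕ) (h : i < n) :
    qtorF z X T (n+1) (i+1) = qtorF z X T n (i+1) * X n (i+1) +
      z (n+1) • (qtorF z X T n i * T n (i+1)) := by
  rw [qtorF, if_neg (by omega)]

theorem qtorF_commute_of (z : ℕ → K) (X T : ℕ → ℕ → A) (y : A) (n : ℕ)
    (hX : ∀ k i, 1 ≤ i → i ≤ k → k < n → Commute y (X k i))
    (hT : ∀ k i, 1 ≤ i → i ≤ k → k < n → Commute y (T k i)) :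
    ∀ j ≤ n, Commute y (qtorF z X T n j) := by
  induction n with
  | zero => intro j hj; obtain rfl : j = 0 := by omega
            rw [qtorF_zero]; exact Commute.one_right y
  | succ n ih =>
    have ih' := ih (fun k i h1 h2 h3 => hX k i h1 h2 (by omega))
      (fun k i h1 h2 h3 => hT k i h1 h2 (by omega))
    intro j hj
    cases j with
    | zero => rw [qtorF_zero]; exact Commute.one_right y
    | succ j =>
      by_cases hjn : j = n
      · subst hjn
        rw [qtorF_top]
        exact (ih' j le_rfl).smul_right _
      · rw [qtorF_mid _ _ _ _ _ (by omega)]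
        exact ((ih' _ (by omega)).mul_right (hX _ _ (by omega) (by omega) (by omega))).add_right
          (((ih' _ (by omega)).mul_right (hT _ _ (by omega) (by omega) (by omega))).smul_right _)

/-- The relations of the quantum torus algebra. -/
structure TorusRel (q : K) (ℓ : ℕ) (X T : ℕ → ℕ → A) : Prop where
  hXX : ∀ k i m j, 1 ≤ k → k ≤ ℓ → 1 ≤ i → i ≤ k → 1 ≤ m → m ≤ ℓ → 1 ≤ j → j ≤ m →
      X k i * X m j = X m j * X k i
  hTT : ∀ k i m j, 1 ≤ k → k ≤ ℓ → 1 ≤ i → i ≤ k → 1 ≤ m → m ≤ ℓ → 1 ≤ j → j ≤ m →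
      T k i * T m j = T m j * T k i
  hTX : ∀ k i m j, 1 ≤ k → k ≤ ℓ → 1 ≤ i → i ≤ k → 1 ≤ m → m ≤ ℓ → 1 ≤ j → j ≤ m →
      T k i * X m j =
        (if k = m ∧ i = j then q • (X m j * T k i) else X m j * T k i)

variable {q : K} {ℓ : ℕ} {X T : ℕ → ℕ → A}

theorem TorusRel.cXX (R : TorusRel q ℓ X T) {k i m j : ℕ} (h1 : 1 ≤ i ∧ i ≤ k ∧ k ≤ ℓ)
    (h2 : 1 ≤ j ∧ j ≤ m ∧ m ≤ ℓ) : Commute (X k i) (X m j) :=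
  R.hXX _ _ _ _ (by omega) (by omega) (by omega) (by omega) (by omega) (by omega) (by omega)
    (by omega)

theorem TorusRel.cTT (R : TorusRel q ℓ X T) {k i m j : ℕ} (h1 : 1 ≤ i ∧ i ≤ k ∧ k ≤ ℓ)
    (h2 : 1 ≤ j ∧ j ≤ m ∧ m ≤ ℓ) : Commute (T k i) (T m j) :=
  R.hTT _ _ _ _ (by omega) (by omega) (by omega) (by omega) (by omega) (by omega) (by omega)
    (by omega)

theorem TorusRel.cTX (R : TorusRel q ℓ X T) {k i m j : ℕ} (h1 : 1 ≤ i ∧ i ≤ k ∧ k ≤ ℓ)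
    (h2 : 1 ≤ j ∧ j ≤ m ∧ m ≤ ℓ) (h : ¬ (k = m ∧ i = j)) : Commute (T k i) (X m j) := by
  have := R.hTX k i m j (by omega) (by omega) (by omega) (by omega) (by omega) (by omega)
    (by omega) (by omega)
  rw [if_neg h] at this
  exact this

theorem TorusRel.qTX (R : TorusRel q ℓ X T) {k i : ℕ} (h1 : 1 ≤ i ∧ i ≤ k ∧ k ≤ ℓ) :
    T k i * X k i = q • (X k i * T k i) := by
  have := R.hTX k i k i (by omega) (by omega) (by omega) (by omega) (by omega) (by omega)
    (by omega) (by omega)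
  rwa [if_pos ⟨rfl, rfl⟩] at this

theorem TorusRel.cXf (R : TorusRel q ℓ X T) (z : ℕ → K) {k i n j : ℕ}
    (h1 : 1 ≤ i ∧ i ≤ k ∧ k ≤ ℓ) (h2 : j ≤ n ∧ n ≤ k) : Commute (X k i) (qtorF z X T n j) :=
  qtorF_commute_of z X T _ n (fun _ _ _ _ _ => R.cXX h1 (by omega))
    (fun _ _ _ _ _ => (R.cTX (by omega) h1 (by omega)).symm) j (by omega)

theorem TorusRel.cTf (R : TorusRel q ℓ X T) (z : ℕ → K) {k i n j : ℕ}
    (h1 : 1 ≤ i ∧ i ≤ k ∧ k ≤ ℓ) (h2 : j ≤ n ∧ n ≤ k) : Commute (T k i) (qtorF z X T n j) :=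
  qtorF_commute_of z X T _ n (fun _ _ _ _ _ => (R.cTX h1 (by omega) (by omega)))
    (fun _ _ _ _ _ => R.cTT h1 (by omega)) j (by omega)

/-- `X_{n,i}` commutes with `f_{n+1,j}`, `i ≠ j`. -/
theorem TorusRel.cXf' (R : TorusRel q ℓ X T) (z : ℕ → K) {i n j : ℕ}
    (h1 : 1 ≤ i ∧ i ≤ n ∧ n ≤ ℓ) (h2 : j ≤ n + 1) (hij : i ≠ j) :
    Commute (X n i) (qtorF z X T (n+1) j) := by
  cases j with
  | zero => rw [qtorF_zero]; exact Commute.one_right _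
  | succ j =>
    by_cases hjn : j = n
    · subst hjn
      rw [qtorF_top]
      exact (R.cXf z h1 (by omega)).smul_right _
    · rw [qtorF_mid _ _ _ _ _ (by omega)]
      exact ((R.cXf z h1 (by omega)).mul_right (R.cXX h1 (by omega))).add_right
        (((R.cXf z h1 (by omega)).mul_right (R.cTX (by omega) h1 (by omega)).symm).smul_right _)

theorem TorusRel.cTf' (R : TorusRel q ℓ X T) (z : ℕ → K) {i n j : ℕ}
    (h1 : 1 ≤ i ∧ i ≤ n ∧ n ≤ ℓ) (h2 : j ≤ n + 1) (hij : i ≠ j) :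
    Commute (T n i) (qtorF z X T (n+1) j) := by
  cases j with
  | zero => rw [qtorF_zero]; exact Commute.one_right _
  | succ j =>
    by_cases hjn : j = n
    · subst hjn
      rw [qtorF_top]
      exact (R.cTf z h1 (by omega)).smul_right _
    · rw [qtorF_mid _ _ _ _ _ (by omega)]
      exact ((R.cTf z h1 (by omega)).mul_right (R.cTX h1 (by omega) (by omega))).add_right
        (((R.cTf z h1 (by omega)).mul_right (R.cTT h1 (by omega))).smul_right _)

theorem TorusRel.cff (R : TorusRel q ℓ X T) (z : ℕ → K) (n : ℕ) (hn : n ≤ ℓ + 1) :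
    ∀ i ≤ n, ∀ j ≤ n, Commute (qtorF z X T n i) (qtorF z X T n j) := by
  induction n with
  | zero =>
    intro i hi j hj
    obtain ⟨rfl, rfl⟩ : i = 0 ∧ j = 0 := by omega
    exact Commute.refl _
  | succ n ih =>
    have ih' := ih (by omega)
    have key : ∀ i ≤ n, ∀ j ≤ n+1, Commute (qtorF z X T n i) (qtorF z X T (n+1) j) := by
      intro i hi j hj
      cases j with
      | zero => rw [qtorF_zero]; exact Commute.one_right _
      | succ j =>
        by_cases hjn : j = n
        · subst hjn
          rw [qtorF_top]
          exact (ih' _ hi _ le_rfl).smul_right _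
        · rw [qtorF_mid _ _ _ _ _ (by omega)]
          exact ((ih' _ hi _ (by omega)).mul_right (R.cXf z (by omega) (by omega)).symm).add_right
            (((ih' _ hi _ (by omega)).mul_right
              (R.cTf z (by omega) (by omega)).symm).smul_right _)
    intro i hi j hj
    by_cases hij : i = j
    · subst hij; exact Commute.refl _
    cases i with
    | zero => rw [qtorF_zero]; exact Commute.one_left _
    | succ i =>
      by_cases hin : i = n
      · subst hin
        rw [qtorF_top]
        exact (key _ le_rfl _ hj).smul_left _
      · rw [qtorF_mid _ _ _ _ _ (by omega)]
        exact ((key _ (by omega) _ hj).mul_left (R.cXf' z (by omega) hj hij)).add_left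
          (((key _ (by omega) _ hj).mul_left (R.cTf' z (by omega) hj hij)).smul_left _)

theorem TorusRel.expand (R : TorusRel q ℓ X T) (z : ℕ → K) (n m a : ℕ) (hn : n ≤ ℓ) (hm : m < n)
    (e : ℕ → ℕ) :
    qtorF z X T (n+1) (m+1) ^ a * lmon (qtorF z X T n) (n+1) e =
      ∑ c ∈ Finset.range (a+1), (gaussB q a c * z (n+1) ^ (a-c)) •
        (X n (m+1) ^ c * lmon (qtorF z X T n) (n+1)
          (e + (Pi.single (m+1) c + Pi.single m (a-c))) * T n (m+1) ^ (a-c)) := by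
  have hff := R.cff z n (by omega)
  have hff1 : ∀ k < n+1, ∀ j < n+1, Commute (qtorF z X T n k) (qtorF z X T n j) :=
    fun k hk j hj => hff k (by omega) j (by omega)
  have hX1 : Commute (X n (m+1)) (qtorF z X T n (m+1)) := R.cXf z (by omega) (by omega)
  have hX0 : Commute (X n (m+1)) (qtorF z X T n m) := R.cXf z (by omega) (by omega)
  have hT1 : Commute (T n (m+1)) (qtorF z X T n (m+1)) := R.cTf z (by omega) (by omega)
  have hT0 : Commute (T n (m+1)) (qtorF z X T n m) := R.cTf z (by omega) (by omega)
  have hTm : ∀ e, Commute (T n (m+1)) (lmon (qtorF z X T n) (n+1) e) := fun e =>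
    lmon_commute _ _ _ _ fun k hk => R.cTf z (by omega) (by omega)
  rw [qtorF_mid _ _ _ _ _ hm, q_binomial q, Finset.sum_mul]
  · refine Finset.sum_congr rfl fun c _ => ?_
    rw [← hX1.eq, hX1.mul_pow, smul_pow, hT0.symm.mul_pow, mul_smul_comm, smul_smul,
      smul_mul_assoc]
    congr 1
    rw [← add_assoc, add_right_comm, ← lmon_pow_mul _ _ _ (m+1) c (by omega) hff1,
      ← lmon_pow_mul _ _ _ m (a-c) (by omega) hff1]
    simp only [mul_assoc]
    rw [((hTm e).pow_left (a-c)).eq]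
  · rw [smul_mul_assoc, mul_smul_comm, smul_comm q]
    congr 1
    rw [mul_assoc, ← mul_assoc (T n (m+1)), hT1.eq, mul_assoc, R.qTX (by omega), mul_smul_comm,
      mul_smul_comm]
    congr 1
    rw [← mul_assoc, (hff m (by omega) (m+1) (by omega)).eq, mul_assoc, mul_assoc,
      ← mul_assoc _ (X n (m+1)), ← hX0.eq, mul_assoc]

theorem TorusRel.step (R : TorusRel q ℓ X T) (z : ℕ → K) (n m : ℕ) (hn : n ≤ ℓ) (hm : m < n)
    (F : A →ₗ[K] K) (hFX : ∀ x k i, 1 ≤ i → i ≤ k → k ≤ ℓ → F (X k i * x) = F x)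
    (hFT : ∀ x k i, 1 ≤ i → i ≤ k → k ≤ ℓ → F (x * T k i) = F x)
    (a e : ℕ → ℕ) :
    F (lmon (fun k => qtorF z X T (n+1) (k+1)) (m+1) a * lmon (qtorF z X T n) (n+1) e) =
      ∑ c ∈ Finset.range (a m + 1), (gaussB q (a m) c * z (n+1) ^ (a m - c)) *
        F (lmon (fun k => qtorF z X T (n+1) (k+1)) m a * lmon (qtorF z X T n) (n+1)
          (e + (Pi.single (m+1) c + Pi.single m (a m - c)))) := by
  have hFX' : ∀ c x, F (X n (m+1) ^ c * x) = F x := by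
    intro c
    induction c with
    | zero => simp
    | succ c ih => intro x; rw [pow_succ', mul_assoc, hFX _ _ _ (by omega) (by omega) hn, ih]
  have hFT' : ∀ c x, F (x * T n (m+1) ^ c) = F x := by
    intro c
    induction c with
    | zero => simp
    | succ c ih => intro x; rw [pow_succ, ← mul_assoc, hFT _ _ _ (by omega) (by omega) hn, ih]
  have hc : Commute (X n (m+1)) (lmon (fun k => qtorF z X T (n+1) (k+1)) m a) :=
    lmon_commute _ _ _ _ fun k hk => R.cXf' z (by omega) (by omega) (by omega)
  rw [lmon_succ, mul_assoc, R.expand z n m (a m) hn hm e, Finset.mul_sum, map_sum]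
  refine Finset.sum_congr rfl fun c _ => ?_
  rw [mul_smul_comm, map_smul, smul_eq_mul]
  congr 1
  rw [← mul_assoc, hFT', ← mul_assoc, ← (hc.pow_left c).eq, mul_assoc, hFX']

theorem TorusRel.full (R : TorusRel q ℓ X T) (z : ℕ → K) (n : ℕ) (hn : n ≤ ℓ)
    (F : A →ₗ[K] K) (hFX : ∀ x k i, 1 ≤ i → i ≤ k → k ≤ ℓ → F (X k i * x) = F x)
    (hFT : ∀ x k i, 1 ≤ i → i ≤ k → k ≤ ℓ → F (x * T k i) = F x)
    (a : ℕ → ℕ) :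
    F (lmon (fun k => qtorF z X T (n+1) (k+1)) (n+1) a) = z (n+1) ^ (a n) *
      ∑ c ∈ Fintype.piFinset (fun k : Fin n => Finset.range (a k + 1)),
        (∏ k : Fin n, gaussB q (a k) (c k) * z (n+1) ^ (a k - c k)) *
        F (lmon (qtorF z X T n) (n+1) (Pi.single n (a n) +
          ∑ k : Fin n, (Pi.single ((k:ℕ)+1) (c k) + Pi.single (k:ℕ) (a k - c k)))) := by
  have h := iterate_sum a (fun m c => gaussB q (a m) c * z (n+1) ^ (a m - c))
    (fun m c => Pi.single (m+1) c + Pi.single m (a m - c))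
    (fun m e => F (lmon (fun k => qtorF z X T (n+1) (k+1)) m a * lmon (qtorF z X T n) (n+1) e))
    n (by
      intro m hm e
      have := R.step z n m hn hm F hFX hFT a e
      simpa only using this) (Pi.single n (a n))
  have h0 : ∀ x, lmon (fun k => qtorF z X T (n+1) (k+1)) 0 a * x = x := by
    intro x; simp [lmon]
  simp only [h0] at h
  rw [← h, lmon_succ, qtorF_top, smul_pow, mul_smul_comm, map_smul, smul_eq_mul]
  congr 3
  have h1 := lmon_pow_mul (qtorF z X T n) (n+1) 0 n (a n) (by omega)
    (fun k hk j hj => R.cff z n (by omega) k (by omega) j (by omega))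
  rw [zero_add] at h1
  rw [← h1]
  simp [lmon]

end torus

theorem nwhit_zero {K : Type*} [Field K] (q : K) (z : Fin 1 → K) (p : Fin 1 → ℤ) :
    nwhit q 0 z p = z 0 ^ p 0 := by
  obtain ⟨S, hS, hw⟩ := whit_eq q 0 z p (fun k => k.elim0)
  have hS1 : S = {fun k i => p 0} := by
    ext g
    rw [hS, Finset.mem_singleton]
    constructor
    · rintro ⟨_, h⟩
      funext k i
      have hk : k = Fin.last 0 := Fin.ext (by have := k.2; simp at *)
      subst hk
      have hi : i = (0 : Fin 1) := Fin.ext (by have := i.2; simp at *)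
      rw [h, hi]
    · rintro rfl
      refine ⟨fun k => k.elim0, ?_⟩
      funext i
      have hi : i = (0 : Fin 1) := Fin.ext (by have := i.2; simp at *)
      rw [hi]
  rw [nwhit, hw, hS1, Finset.sum_singleton, gzWeight]
  simp

/-- The exponents attached to a dominant weight. -/
def expo (n : ℕ) (p : Fin (n+1) → ℤ) (k : ℕ) : ℕ :=
  ((if h : k < n + 1 then p ⟨k, h⟩ else 0) -
            (if h : k + 1 < n + 1 then p ⟨k + 1, h⟩ else 0)).toNat

theorem lmon_shift {K : Type*} [Field K] {A : Type*} [Ring A] [Algebra K A]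
    (z : ℕ → K) (X T : ℕ → ℕ → A) (n L : ℕ) (e : ℕ → ℕ) :
    lmon (qtorF z X T n) (L+1) e = lmon (fun k => qtorF z X T n (k+1)) L (fun k => e (k+1)) := by
  simp [lmon, List.range_succ_eq_map, qtorF_zero, Function.comp_def]

theorem expo_eq (n : ℕ) (p : Fin (n+2) → ℤ) (hp : ∀ k : Fin (n+1), p k.succ ≤ p k.castSucc)
    (hp0 : 0 ≤ p (Fin.last (n+1))) (c : Fin (n+1) → ℕ)
    (hc : ∀ k : Fin (n+1), c k ≤ expo (n+1) p k) (j : ℕ) (hj : j < n+1) :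
    (Pi.single (n+1) (expo (n+1) p (n+1)) +
      ∑ k : Fin (n+1), (Pi.single ((k:ℕ)+1) (c k) +
        Pi.single (k:ℕ) (expo (n+1) p k - c k)) : ℕ → ℕ) (j+1)
      = expo n (fun i => p i.succ + c i) j := by
  have h1 : ∑ k : Fin (n+1), (Pi.single ((k:ℕ)+1) (c k) : ℕ → ℕ) (j+1) = c ⟨j, hj⟩ := by
    rw [Finset.sum_eq_single ⟨j, hj⟩]
    · simp
    · intro b _ hb
      have : j ≠ b := fun h => hb (Fin.ext h.symm)
      simp [this]
    · simp
  rw [Pi.add_apply, Finset.sum_apply]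
  simp only [Pi.add_apply]
  rw [Finset.sum_add_distrib, h1]
  by_cases hjn : j = n
  · subst hjn
    have h2 : ∑ k : Fin (j+1), (Pi.single (k:ℕ) (expo (j+1) p k - c k) : ℕ → ℕ) (j+1) = 0 := by
      apply Finset.sum_eq_zero
      intro b _
      have : j + 1 ≠ b := by have := b.2; omega
      simp [this]
    rw [h2]
    have hl : (Fin.last (j+1)) = ⟨j+1, by omega⟩ := rfl
    rw [hl] at hp0
    simp [expo]
    omega
  · have hj1 : j + 1 < n + 1 := by omega
    have h2 : ∑ k : Fin (n+1), (Pi.single (k:ℕ) (expo (n+1) p k - c k) : ℕ → ℕ) (j+1)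
        = expo (n+1) p (j+1) - c ⟨j+1, hj1⟩ := by
      rw [Finset.sum_eq_single ⟨j+1, hj1⟩]
      · simp
      · intro b _ hb
        have : j + 1 ≠ b := fun h => hb (Fin.ext h.symm)
        simp [this]
      · simp
    rw [h2]
    have h3 := hc ⟨j+1, hj1⟩
    have h4 := hp ⟨j+1, hj1⟩
    have e1 : expo (n+1) p (j+1) = (p ⟨j+1, by omega⟩ - p ⟨j+2, by omega⟩).toNat := by
      rw [expo, dif_pos (by omega), dif_pos (by omega)]
    have e2 : expo n (fun i => p i.succ + c i) j =
        ((p ⟨j+1, by omega⟩ + c ⟨j, hj⟩) - (p ⟨j+2, by omega⟩ + c ⟨j+1, hj1⟩)).toNat := by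
      rw [expo, dif_pos (by omega), dif_pos (by omega)]
      rfl
    have h5 : p ⟨j+2, by omega⟩ ≤ p ⟨j+1, by omega⟩ := h4
    simp only at h3
    rw [e1] at h3 ⊢
    rw [e2, Pi.single_apply, if_neg (by omega)]
    omega

theorem main_ind {K : Type*} [Field K] {A : Type*} [Ring A] [Algebra K A] {q : K} {ℓ : ℕ}
    {X T : ℕ → ℕ → A} (hq : ∀ n : ℕ, 1 ≤ n → q ^ n ≠ 1) (R : TorusRel q ℓ X T) (z : ℕ → K)
    (F : A →ₗ[K] K) (hFX : ∀ x k i, 1 ≤ i → i ≤ k → k ≤ ℓ → F (X k i * x) = F x)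
    (hFT : ∀ x k i, 1 ≤ i → i ≤ k → k ≤ ℓ → F (x * T k i) = F x) (hF1 : F 1 = 1)
    (n : ℕ) (hn : n ≤ ℓ) : ∀ (p : Fin (n+1) → ℤ) (_ : ∀ k : Fin n, p k.succ ≤ p k.castSucc)
      (_ : 0 ≤ p (Fin.last n)),
      F (lmon (fun k => qtorF z X T (n+1) (k+1)) (n+1) (expo n p)) =
        nwhit q n (fun i => z ((i:ℕ)+1)) p := by
  induction n with
  | zero =>
    intro p hp hp0
    rw [nwhit_zero, lmon_succ, qtorF_top, qtorF_zero, smul_pow, one_pow]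
    have h0 : lmon (fun k => qtorF z X T (0 + 1) (k + 1)) 0 (expo 0 p) = 1 := by simp [lmon]
    have h1 : ((expo 0 p 0 : ℕ) : ℤ) = p 0 := by
      have : 0 ≤ p 0 := hp0
      simpa [expo] using this
    rw [h0, one_mul, map_smul, hF1, smul_eq_mul, mul_one, ← h1]
    simp
  | succ n ih =>
    intro p hp hp0
    rw [R.full z (n+1) hn F hFX hFT, nwhit_succ q n _ p hp, Finset.mul_sum]
    have ea : ∀ k : Fin (n+1), ((expo (n+1) p k : ℕ) : ℤ) = p k.castSucc - p k.succ := by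
      intro k
      have h1 := hp k
      have : expo (n+1) p k = (p k.castSucc - p k.succ).toNat := by
        rw [expo, dif_pos (by omega), dif_pos (by omega)]
        rfl
      rw [this]
      omega
    have el : ((expo (n+1) p (n+1) : ℕ) : ℤ) = p (Fin.last (n+1)) := by
      have : expo (n+1) p (n+1) = (p (Fin.last (n+1))).toNat := by
        rw [expo, dif_pos (by omega), dif_neg (by omega), sub_zero]
        rfl
      rw [this]
      omega
    refine Finset.sum_bij' (i := fun c _ k => p k.succ + (c k : ℤ))
      (j := fun r _ k => (r k - p k.succ).toNat) ?_ ?_ ?_ ?_ ?_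
    · intro c hc
      simp only [Fintype.mem_piFinset, Finset.mem_range] at hc
      rw [Finset.mem_Icc]
      refine ⟨fun k => ?_, fun k => ?_⟩
      · simp
      · have := hc k
        have := ea k
        show p k.succ + (c k : ℤ) ≤ p k.castSucc
        omega
    · intro r hr
      rw [Finset.mem_Icc] at hr
      simp only [Fintype.mem_piFinset, Finset.mem_range]
      intro k
      have := ea k
      have h1 : p k.succ ≤ r k := hr.1 k
      have h2 : r k ≤ p k.castSucc := hr.2 k
      omega
    · intro c hc
      funext k
      simp
    · intro r hr
      rw [Finset.mem_Icc] at hr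
      funext k
      have h1 : p k.succ ≤ r k := hr.1 k
      show p k.succ + ((r k - p k.succ).toNat : ℤ) = r k
      omega
    · intro c hc
      simp only [Fintype.mem_piFinset, Finset.mem_range] at hc
      have hF : F (lmon (qtorF z X T (n+1)) (n+1+1) (Pi.single (n+1) (expo (n+1) p (n+1)) +
          ∑ k : Fin (n+1), (Pi.single ((k:ℕ)+1) (c k) +
            Pi.single (k:ℕ) (expo (n+1) p k - c k)))) =
          nwhit q n (fun i => z ((i:ℕ)+1)) (fun k => p k.succ + (c k : ℤ)) := by
        rw [← ih (by omega), lmon_shift]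
        · congr 1
          apply lmon_congr
          intro k hk
          congr 1
          exact expo_eq n p hp hp0 c (fun k => by have := hc k; omega) k hk
        · intro k
          have h1 := hc k.succ
          have h2 := ea k.succ
          have h3 : p k.castSucc.succ = p k.succ.castSucc := rfl
          rw [h3]
          omega
        · have : p (Fin.last n).succ = p (Fin.last (n+1)) := rfl
          rw [this]
          omega
      rw [hF, Finset.prod_mul_distrib]
      have hz : z (n+1+1) ^ expo (n+1) p (n+1) *
          ∏ k : Fin (n+1), z (n+1+1) ^ (expo (n+1) p k - c k) =
          z (n+1+1) ^ ((∑ i, p i) - ∑ i : Fin (n+1), (p i.succ + (c i : ℤ))) := by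
        rw [Finset.prod_pow_eq_pow_sum, ← pow_add, ← zpow_natCast]
        congr 1
        have h1 : ∀ k : Fin (n+1), ((expo (n+1) p k - c k : ℕ) : ℤ) =
            p k.castSucc - (p k.succ + c k) := by
          intro k
          have := hc k
          have := ea k
          omega
        rw [Fin.sum_univ_castSucc p]
        push_cast
        rw [Finset.sum_congr rfl (fun k _ => h1 k), Finset.sum_sub_distrib, el]
        ring
      have hg : ∀ k : Fin (n+1), gaussB q (expo (n+1) p k) (c k) =
          qfac q (p k.castSucc - p k.succ) / (qfac q (p k.succ + (c k : ℤ) - p k.succ) *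
            qfac q (p k.castSucc - (p k.succ + (c k : ℤ)))) := by
        intro k
        have h0 := hc k
        have h1 := ea k
        have h2 := gaussB_mul q (expo (n+1) p k) (c k) (expo (n+1) p k - c k) (by omega)
        have e1 : p k.succ + (c k : ℤ) - p k.succ = (c k : ℤ) := by ring
        have e2 : p k.castSucc - (p k.succ + (c k : ℤ)) = ((expo (n+1) p k - c k : ℕ) : ℤ) := by
          omega
        rw [e1, e2, ← h1, ← h2]
        rw [mul_div_cancel_right₀]
        exact mul_ne_zero (qfac_ne q hq _) (qfac_ne q hq _)
      rw [Finset.prod_congr rfl (fun k _ => hg k)]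
      simp only [Fin.val_last, Fin.val_castSucc]
      rw [← hz]
      ring


/-- the normalized `q`-deformed `gl_{ℓ+1}`-Whittaker function `Ψ̃_z(p)` as a
matrix element `⟨v₋| ∏_{k=1}^{ℓ+1} f_{ℓ+1,k}^{p_k - p_{k+1}} |v₊⟩` over a quantum torus
algebra. -/
theorem whittaker_matrix_element {K : Type*} [Field K] (q : K)
    (hq : ∀ n : ℕ, 1 ≤ n → q ^ n ≠ 1) (ℓ : ℕ) (hℓ : 1 ≤ ℓ)
    (z : ℕ → K) (hz : ∀ k, 1 ≤ k → k ≤ ℓ + 1 → z k ≠ 0)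
    (A : Type*) [Ring A] [Algebra K A] (X T : ℕ → ℕ → A)
    (hXX : ∀ k i m j, 1 ≤ k → k ≤ ℓ → 1 ≤ i → i ≤ k → 1 ≤ m → m ≤ ℓ → 1 ≤ j → j ≤ m →
      X k i * X m j = X m j * X k i)
    (hTT : ∀ k i m j, 1 ≤ k → k ≤ ℓ → 1 ≤ i → i ≤ k → 1 ≤ m → m ≤ ℓ → 1 ≤ j → j ≤ m →
      T k i * T m j = T m j * T k i)
    (hTX : ∀ k i m j, 1 ≤ k → k ≤ ℓ → 1 ≤ i → i ≤ k → 1 ≤ m → m ≤ ℓ → 1 ≤ j → j ≤ m →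
      T k i * X m j =
        (if k = m ∧ i = j then q • (X m j * T k i) else X m j * T k i))
    (V : Type*) [AddCommGroup V] [Module A V]
    (vp : V) (hvp : ∀ k i, 1 ≤ k → k ≤ ℓ → 1 ≤ i → i ≤ k → T k i • vp = vp)
    (φ : V → K)
    (hadd : ∀ v w, φ (v + w) = φ v + φ w)
    (hsmul : ∀ (c : K) (v : V), φ ((algebraMap K A c) • v) = c * φ v)
    (hφX : ∀ (w : V) k i, 1 ≤ k → k ≤ ℓ → 1 ≤ i → i ≤ k → φ (X k i • w) = φ w)
    (hφv : φ vp = 1)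
    (p : Fin (ℓ + 1) → ℤ) (hp : ∀ k : Fin ℓ, p k.succ ≤ p k.castSucc)
    (hp0 : 0 ≤ p (Fin.last ℓ)) :
    φ (((List.range (ℓ + 1)).map (fun k =>
        qtorF z X T (ℓ + 1) (k + 1) ^
          (((if h : k < ℓ + 1 then p ⟨k, h⟩ else 0) -
            (if h : k + 1 < ℓ + 1 then p ⟨k + 1, h⟩ else 0)).toNat))).prod • vp)
      = nwhit q ℓ (fun i => z ((i : ℕ) + 1)) p := by
  have R : TorusRel q ℓ X T := ⟨hXX, hTT, hTX⟩
  let F : A →ₗ[K] K :=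
    { toFun := fun a => φ (a • vp)
      map_add' := fun a b => by rw [add_smul, hadd]
      map_smul' := fun c a => by
        rw [Algebra.smul_def, mul_smul, hsmul, RingHom.id_apply, smul_eq_mul] }
  exact main_ind hq R z F
    (fun x k i h1 h2 h3 => by
      show φ ((X k i * x) • vp) = φ (x • vp)
      rw [mul_smul, hφX _ _ _ (by omega) h3 h1 h2])
    (fun x k i h1 h2 h3 => by
      show φ ((x * T k i) • vp) = φ (x • vp)
      rw [mul_smul, hvp _ _ (by omega) h3 h1 h2])
    (by
      show φ ((1 : A) • vp) = 1
      rw [one_smul, hφv]) ℓ le_rfl p hp hp0
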